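/- Define the curve σ_{a,h} ⊂ ℝ² (for a > 0, h ≥ 0) as follows: let x₀ = (0, h/2) and y₀ = (2a, −h/2); let σ_{a,h} be the union of (i) the half-circles {p : |p − x₀| = (1+2i)a, p₂ ≥ h/2} for i = 0,1,2,…, (ii) the half-circles {p : |p − y₀| = (1+2i)a, p₂ ≤ −h/2} for i = 0,1,2,…, and (iii) the vertical segments joining the endpoints of corresponding half-circles, namely the segments {(x₀₁ ± (1+2i)a)} × [−h/2, h/2] matched so that the union is connected. Then σ_{a,h} is a closed subset of ℝ² which is a connected C¹ one-dimensional submanifold of ℝ² (with locally Lipschitz unit tangent, i.e., of class C^{1,1}). -/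

import Mathlib

open Real in
/-- The curve `σ_{a,h} ⊂ ℝ²`: two families of concentric half-circles of radii
`(1+2i)a` around `x₀ = (0, h/2)` (in the upper half-plane `{p₂ ≥ h/2}`) and
around `y₀ = (2a, -h/2)` (in the lower half-plane `{p₂ ≤ -h/2}`),
joined by the vertical segments `{(2j+1)a} × [-h/2, h/2]`. -/
def sigmaCurve (a h : ℝ) : Set (EuclideanSpace ℝ (Fin 2)) :=
  {p | (∃ i : ℕ, Real.sqrt ((p 0) ^ 2 + (p 1 - h / 2) ^ 2) = (1 + 2 * i) * a) ∧ h / 2 ≤ p 1} ∪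
  {p | (∃ i : ℕ, Real.sqrt ((p 0 - 2 * a) ^ 2 + (p 1 + h / 2) ^ 2) = (1 + 2 * i) * a) ∧
        p 1 ≤ -(h / 2)} ∪
  {p | (∃ j : ℤ, p 0 = (2 * j + 1) * a) ∧ p 1 ∈ Set.Icc (-(h / 2)) (h / 2)}

/-!
Cut the curve along the first coordinate axis. In the upper half-plane it falls into arches, the
level sets `(1 + 2 * i) * a` of the distance to the ray going down from `(0, h / 2)`; the point
reflection in `(a, 0)` exchanges the two families of half-circles, so it maps these arches to those
in the lower half-plane. An arch is a half-circle continued by its two vertical tangent lines,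
hence its unit tangent depends on arc length with Lipschitz constant `1 / radius ≤ 1 / a`.

Numbering the arches by `m : ℤ`, reflecting every other one and running through them in order, each
arch starts where, and in the direction in which, the previous one ends, so the arches glue to one
unit-speed curve with `1 / a`-Lipschitz tangent. It is injective: arches on the same side of the
axis have different radii, while arches on opposite sides can only meet on the axis, in starting
points of arches, which are pairwise distinct.
-/

open Set Filter
open scoped Real NNReal

theorem hasDerivWithinAt_of_eqOn_of_isClosed {𝕜 E : Type*} [NontriviallyNormedField 𝕜]
    [NormedAddCommGroup E] [NormedSpace 𝕜 E] {F g : 𝕜 → E} {v : E} {S : Set 𝕜} {t : 𝕜}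
    (hS : IsClosed S) (hFg : EqOn F g S) (hg : t ∈ S → HasDerivWithinAt g v S t) :
    HasDerivWithinAt F v S t := by
  by_cases ht : t ∈ S
  · exact (hg ht).congr hFg (hFg ht)
  · exact HasFDerivWithinAt.of_notMem_closure (by rwa [hS.closure_eq])

theorem exists_mem_Ico_of_tendsto_int {α : Type*} [LinearOrder α] [NoMaxOrder α] {T : ℤ → α}
    (hT : Monotone T) (htop : Tendsto T atTop atTop) (hbot : Tendsto T atBot atBot) (t : α) :
    ∃ m, t ∈ Ico (T m) (T (m + 1)) := by
  obtain ⟨k, hk⟩ := (htop.eventually (eventually_gt_atTop t)).exists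
  obtain ⟨m, hm, hmax⟩ := Int.exists_greatest_of_bdd (P := fun m => T m ≤ t)
    ⟨k, fun m hm => (hT.reflect_lt (hm.trans_lt hk)).le⟩
    (hbot.eventually (eventually_le_atBot t)).exists
  exact ⟨m, hm, lt_of_not_ge fun h => (lt_add_one m).not_ge (hmax _ h)⟩

theorem hasDerivAt_vec₂ {f g : ℝ → ℝ} {f' g' t : ℝ} (hf : HasDerivAt f f' t)
    (hg : HasDerivAt g g' t) : HasDerivAt (fun s => !₂[f s, g s]) !₂[f', g'] t := by
  have hpi : HasDerivAt (fun s => ![f s, g s]) ![f', g'] t := by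
    rw [hasDerivAt_pi]
    exact Fin.forall_fin_two.2 ⟨hf, hg⟩
  exact (PiLp.continuousLinearEquiv 2 ℝ fun _ : Fin 2 => ℝ).symm.hasFDerivAt.comp_hasDerivAt t hpi

theorem norm_vec₂ (x y : ℝ) : ‖!₂[x, y]‖ = √(x ^ 2 + y ^ 2) := by
  simp [EuclideanSpace.norm_eq]

theorem neg_one_zpow_neg {α : Type*} [DivisionRing α] (m : ℤ) : (-1 : α) ^ (-m) = (-1) ^ m := by
  rw [← inv_zpow', inv_neg_one]

theorem neg_one_zpow_eq_or_eq_neg {α : Type*} [DivisionRing α] (m n : ℤ) :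
    (-1 : α) ^ m = (-1) ^ n ∨ (-1 : α) ^ m = -(-1) ^ n := by
  rcases Int.even_or_odd m with hm | hm <;> rcases Int.even_or_odd n with hn | hn <;>
    simp [hm.neg_one_zpow, hn.neg_one_zpow]

section TangentExtension

variable {E : Type*} [NormedAddCommGroup E] [NormedSpace ℝ E] {A B s : ℝ} (hAB : A ≤ B)
  {f f' : ℝ → E}

/-- The curve `f : [A, B] → E` with velocity `f'`, continued beyond either end of `[A, B]` along
the tangent line there; the nearest point `projIcc A B hAB s` of `[A, B]` encodes the three
cases in one formula. -/
noncomputable def tangentExtension (f f' : ℝ → E) (s : ℝ) : E :=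
  f (projIcc A B hAB s) + (s - projIcc A B hAB s) • f' (projIcc A B hAB s)

theorem tangentExtension_of_le_left (hs : s ≤ A) :
    tangentExtension hAB f f' s = f A + (s - A) • f' A := by
  rw [tangentExtension, projIcc_of_le_left hAB hs]

theorem tangentExtension_of_mem (hs : s ∈ Icc A B) : tangentExtension hAB f f' s = f s := by
  rw [tangentExtension, projIcc_of_mem hAB hs, sub_self, zero_smul, add_zero]

theorem tangentExtension_of_right_le (hs : B ≤ s) :
    tangentExtension hAB f f' s = f B + (s - B) • f' B := by
  rw [tangentExtension, projIcc_of_right_le hAB hs]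

theorem hasDerivAt_tangentExtension (hf : ∀ s ∈ Icc A B, HasDerivWithinAt f (f' s) (Icc A B) s)
    (s : ℝ) : HasDerivAt (tangentExtension hAB f f') (f' (projIcc A B hAB s)) s := by
  have hline (C : ℝ) (S : Set ℝ) :
      HasDerivWithinAt (fun s => f C + (s - C) • f' C) (f' C) S s := by
    simpa using ((((hasDerivAt_id s).sub_const C).smul_const (f' C)).const_add
      (f C)).hasDerivWithinAt
  have hleft : HasDerivWithinAt (tangentExtension hAB f f') (f' (projIcc A B hAB s)) (Iic A) s :=
    hasDerivWithinAt_of_eqOn_of_isClosed isClosed_Iic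
      (fun _ => tangentExtension_of_le_left hAB) fun hs => by
        rw [projIcc_of_le_left hAB hs]; exact hline A _
  have hmid : HasDerivWithinAt (tangentExtension hAB f f') (f' (projIcc A B hAB s)) (Icc A B) s :=
    hasDerivWithinAt_of_eqOn_of_isClosed isClosed_Icc
      (fun _ => tangentExtension_of_mem hAB) fun hs => by
        rw [projIcc_of_mem hAB hs]; exact hf s hs
  have hright : HasDerivWithinAt (tangentExtension hAB f f') (f' (projIcc A B hAB s)) (Ici B) s :=
    hasDerivWithinAt_of_eqOn_of_isClosed isClosed_Ici
      (fun _ => tangentExtension_of_right_le hAB) fun hs => by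
        rw [projIcc_of_right_le hAB hs]; exact hline B _
  have hunion := (hleft.union hmid).union hright
  rwa [Iic_union_Icc_eq_Iic hAB, Iic_union_Ici, hasDerivWithinAt_univ] at hunion

end TangentExtension

section Glue

/-- The function equal to the `m`-th piece `f m` on `[T m, T (m + 1))`; the index of the piece
used at `t` is the largest `m` with `T m ≤ t`. The value is meaningful only if those intervals
cover the domain, since otherwise the supremum may be a junk value. -/
noncomputable def glue {α E : Type*} [LinearOrder α] (T : ℤ → α) (f : ℤ → α → E) (t : α) : E :=
  f (sSup {m | T m ≤ t}) t

section Order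

variable {α E : Type*} [LinearOrder α] {T : ℤ → α} {f : ℤ → α → E} {m : ℤ}

theorem glue_eq_of_mem_Ico (hT : Monotone T) {t : α} (ht : t ∈ Ico (T m) (T (m + 1))) :
    glue T f t = f m t := by
  have hgreatest : IsGreatest {k | T k ≤ t} m :=
    ⟨ht.1, fun _ hk => Int.lt_add_one_iff.1 (hT.reflect_lt (lt_of_le_of_lt hk ht.2))⟩
  rw [glue, hgreatest.csSup_eq]

theorem eqOn_glue_Icc (hT : StrictMono T)
    (hf : ∀ m, f m (T (m + 1)) = f (m + 1) (T (m + 1))) (m : ℤ) :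
    EqOn (glue T f) (f m) (Icc (T m) (T (m + 1))) := by
  rintro t ⟨hmt, htm⟩
  rcases htm.lt_or_eq with htm | rfl
  · exact glue_eq_of_mem_Ico hT.monotone ⟨hmt, htm⟩
  · rw [glue_eq_of_mem_Ico hT.monotone ⟨le_rfl, hT (lt_add_one _)⟩, hf]

theorem range_glue (hT : StrictMono T) (hcover : ∀ t, ∃ m, t ∈ Ico (T m) (T (m + 1)))
    (hf : ∀ m, f m (T (m + 1)) = f (m + 1) (T (m + 1))) :
    range (glue T f) = ⋃ m, f m '' Icc (T m) (T (m + 1)) := by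
  simp_rw [← (eqOn_glue_Icc hT hf _).image_eq, ← image_iUnion]
  rw [eq_univ_of_forall fun t => mem_iUnion.2 ((hcover t).imp fun _ h => Ico_subset_Icc_self h),
    image_univ]

theorem glue_injective (hT : Monotone T) (hcover : ∀ t, ∃ m, t ∈ Ico (T m) (T (m + 1)))
    (hf : ∀ m n, ∀ s ∈ Ico (T m) (T (m + 1)), ∀ t ∈ Ico (T n) (T (n + 1)),
      f m s = f n t → s = t) : (glue T f).Injective := by
  intro s t hst
  obtain ⟨m, hm⟩ := hcover s
  obtain ⟨n, hn⟩ := hcover t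
  rw [glue_eq_of_mem_Ico hT hm, glue_eq_of_mem_Ico hT hn] at hst
  exact hf m n s hm t hn hst

end Order

variable {T : ℤ → ℝ}

theorem hasDerivAt_glue {E : Type*} [NormedAddCommGroup E] [NormedSpace ℝ E] {f f' : ℤ → ℝ → E}
    (hT : StrictMono T) (hcover : ∀ t, ∃ m, t ∈ Ico (T m) (T (m + 1)))
    (hf : ∀ m, f m (T (m + 1)) = f (m + 1) (T (m + 1)))
    (hf' : ∀ m, f' m (T (m + 1)) = f' (m + 1) (T (m + 1)))
    (hderiv : ∀ m, ∀ t ∈ Icc (T m) (T (m + 1)),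
      HasDerivWithinAt (f m) (f' m t) (Icc (T m) (T (m + 1))) t) (t : ℝ) :
    HasDerivAt (glue T f) (glue T f' t) t := by
  have hpiece (m : ℤ) : HasDerivWithinAt (glue T f) (glue T f' t) (Icc (T m) (T (m + 1))) t :=
    hasDerivWithinAt_of_eqOn_of_isClosed isClosed_Icc (eqOn_glue_Icc hT hf m) fun ht => by
      rw [eqOn_glue_Icc hT hf' m ht]; exact hderiv m t ht
  obtain ⟨m, hmt, htm⟩ := hcover t
  have hunion := (hpiece (m - 1)).union (hpiece m)
  rw [sub_add_cancel, Icc_union_Icc_eq_Icc (hT.monotone (by lia)) (hT.monotone (by lia))] at hunion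
  exact hunion.hasDerivAt (Icc_mem_nhds ((hT (sub_one_lt m)).trans_le hmt) htm)

theorem lipschitzWith_glue {E : Type*} [PseudoMetricSpace E] {f : ℤ → ℝ → E} {K : ℝ≥0}
    (hT : StrictMono T) (hcover : ∀ t, ∃ m, t ∈ Ico (T m) (T (m + 1)))
    (hf : ∀ m, f m (T (m + 1)) = f (m + 1) (T (m + 1)))
    (hlip : ∀ m, LipschitzOnWith K (f m) (Icc (T m) (T (m + 1)))) :
    LipschitzWith K (glue T f) := by
  have hpiece (m : ℤ) {s t : ℝ} (hs : s ∈ Icc (T m) (T (m + 1))) (ht : t ∈ Icc (T m) (T (m + 1)))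
      (hst : s ≤ t) : dist (glue T f s) (glue T f t) ≤ K * (t - s) := by
    rw [eqOn_glue_Icc hT hf m hs, eqOn_glue_Icc hT hf m ht, ← abs_of_nonneg (sub_nonneg.2 hst),
      ← Real.dist_eq, dist_comm t s]
    exact (hlip m).dist_le_mul s hs t ht
  have hchain {m n : ℤ} (hmn : m ≤ n) {s : ℝ} (hs : s ∈ Icc (T m) (T (m + 1))) :
      ∀ t ∈ Icc (T n) (T (n + 1)), s ≤ t → dist (glue T f s) (glue T f t) ≤ K * (t - s) := by
    induction n, hmn using Int.leInduction with
    | base => exact fun t ht hst => hpiece m hs ht hst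
    | succ n hmn ih =>
      intro t ht _
      have hn : T n ≤ T (n + 1) := hT.monotone (by lia)
      have hn' : T (n + 1) ≤ T (n + 1 + 1) := hT.monotone (by lia)
      have hsn : s ≤ T (n + 1) := hs.2.trans (hT.monotone (by lia))
      calc dist (glue T f s) (glue T f t)
          ≤ dist (glue T f s) (glue T f (T (n + 1))) + dist (glue T f (T (n + 1))) (glue T f t) :=
            dist_triangle _ _ _
        _ ≤ K * (T (n + 1) - s) + K * (t - T (n + 1)) :=
            add_le_add (ih _ ⟨hn, le_rfl⟩ hsn) (hpiece _ ⟨le_rfl, hn'⟩ ht ht.1)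
        _ = K * (t - s) := by ring
  refine LipschitzWith.of_dist_le_mul fun s t => ?_
  wlog hst : s ≤ t generalizing s t
  · rw [dist_comm, dist_comm s]
    exact this t s (le_of_not_ge hst)
  obtain ⟨m, hm⟩ := hcover s
  obtain ⟨n, hn⟩ := hcover t
  have hmn : m ≤ n := Int.lt_add_one_iff.1 (hT.lt_iff_lt.1 ((hm.1.trans hst).trans_lt hn.2))
  rw [dist_comm s t, Real.dist_eq, abs_of_nonneg (sub_nonneg.2 hst)]
  exact hchain hmn (Ico_subset_Icc_self hm) t (Ico_subset_Icc_self hn) hst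

end Glue

namespace sigmaCurve

local notation "ℝ²" => EuclideanSpace ℝ (Fin 2)

section Arch

variable {R h t : ℝ} {p : ℝ²}

/-- The half-circle of radius `|R|` in the upper half-plane from `(R, 0)` to `(-R, 0)`; the sign
of `R` gives the direction in which it is run through. -/
noncomputable def halfCircle (R φ : ℝ) : ℝ² := !₂[R * Real.cos φ, |R| * Real.sin φ]

/-- The velocity of `halfCircle R`. -/
noncomputable def halfCircleVelocity (R φ : ℝ) : ℝ² := !₂[-(R * Real.sin φ), |R| * Real.cos φ]

theorem hasDerivAt_halfCircle (R φ : ℝ) :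
    HasDerivAt (halfCircle R) (halfCircleVelocity R φ) φ := by
  simpa only [mul_neg] using!
    hasDerivAt_vec₂ ((Real.hasDerivAt_cos φ).const_mul R) ((Real.hasDerivAt_sin φ).const_mul |R|)

theorem norm_halfCircle (R φ : ℝ) : ‖halfCircle R φ‖ = |R| := by
  rw [halfCircle, norm_vec₂, mul_pow, mul_pow, sq_abs, ← mul_add, Real.cos_sq_add_sin_sq, mul_one,
    Real.sqrt_sq_eq_abs]

theorem norm_halfCircleVelocity (R φ : ℝ) : ‖halfCircleVelocity R φ‖ = |R| := by
  rw [halfCircleVelocity, norm_vec₂, neg_sq, mul_pow, mul_pow, sq_abs, ← mul_add,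
    Real.sin_sq_add_cos_sq, mul_one, Real.sqrt_sq_eq_abs]

theorem lipschitzWith_halfCircleVelocity (R : ℝ) : LipschitzWith ‖R‖₊ (halfCircleVelocity R) := by
  have hderiv (φ : ℝ) : HasDerivAt (halfCircleVelocity R) (-halfCircle R φ) φ := by
    refine (hasDerivAt_vec₂ ((Real.hasDerivAt_sin φ).const_mul R).neg
      ((Real.hasDerivAt_cos φ).const_mul |R|)).congr_deriv ?_
    ext i
    fin_cases i <;> simp [halfCircle]
  refine lipschitzWith_of_nnnorm_deriv_le (fun φ => (hderiv φ).differentiableAt) fun φ => ?_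
  rw [(hderiv φ).deriv, nnnorm_neg, ← NNReal.coe_le_coe, coe_nnnorm, coe_nnnorm, norm_halfCircle,
    Real.norm_eq_abs]

theorem exists_halfCircle_eq (hR : R ≠ 0) (hp : 0 ≤ p 1) (hnorm : ‖p‖ = |R|) :
    ∃ φ ∈ Icc 0 π, halfCircle R φ = p := by
  have hsq : p 0 ^ 2 + p 1 ^ 2 = R ^ 2 := by
    rw [← sq_abs R, ← hnorm, EuclideanSpace.norm_sq_eq, Fin.sum_univ_two, Real.norm_eq_abs,
      Real.norm_eq_abs, sq_abs, sq_abs]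
  obtain ⟨hlower, hupper⟩ : -1 ≤ p 0 / R ∧ p 0 / R ≤ 1 := by
    rw [← abs_le, abs_div, div_le_one (abs_pos.2 hR), ← sq_le_sq]
    exact hsq ▸ le_add_of_nonneg_right (sq_nonneg _)
  refine ⟨Real.arccos (p 0 / R), ⟨Real.arccos_nonneg _, Real.arccos_le_pi _⟩, ?_⟩
  have hsin : |R| * √(1 - (p 0 / R) ^ 2) = p 1 := by
    rw [← Real.sqrt_sq (abs_nonneg R), sq_abs, ← Real.sqrt_mul (sq_nonneg R), mul_sub, mul_one,
      ← mul_pow, mul_div_cancel₀ _ hR, ← hsq, add_sub_cancel_left, Real.sqrt_sq hp]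
  ext i
  fin_cases i
  · simp [halfCircle, Real.cos_arccos hlower hupper, mul_div_cancel₀ _ hR]
  · simpa [halfCircle, Real.sin_arccos] using hsin

/-- The distance from `p` to the downward vertical ray with top end `(0, h / 2)`. -/
noncomputable def archRadius (h : ℝ) (p : ℝ²) : ℝ := √(p 0 ^ 2 + max (p 1 - h / 2) 0 ^ 2)

theorem archRadius_of_le (hp : p 1 ≤ h / 2) : archRadius h p = |p 0| := by
  rw [archRadius, max_eq_right (sub_nonpos.2 hp), zero_pow two_ne_zero, add_zero,
    Real.sqrt_sq_eq_abs]

theorem archRadius_of_ge (hp : h / 2 ≤ p 1) :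
    archRadius h p = √(p 0 ^ 2 + (p 1 - h / 2) ^ 2) := by
  rw [archRadius, max_eq_left (sub_nonneg.2 hp)]

theorem continuous_archRadius (h : ℝ) : Continuous (archRadius h) := by
  unfold archRadius
  fun_prop

/-- The half-circle of radius `r` around `(0, h / 2)` in `{p₂ ≥ h / 2}`, standing on two vertical
segments from the first coordinate axis: a level set of `archRadius h` in the upper half-plane. -/
def arch (h r : ℝ) : Set ℝ² := {p | 0 ≤ p 1 ∧ archRadius h p = r}

/-- The arc-length parametrization, for `t ∈ [0, h + π|R|]`, of `arch h |R|` from `(R, 0)` to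
`(-R, 0)`: the vertical segments are tangent lines of the half-circle. -/
noncomputable def archPath (R h t : ℝ) : ℝ² :=
  !₂[0, h / 2] +
    tangentExtension Real.pi_nonneg (halfCircle R) (halfCircleVelocity R) ((t - h / 2) / |R|)

/-- The velocity of `archPath R h`. -/
noncomputable def archTangent (R h t : ℝ) : ℝ² :=
  |R|⁻¹ • halfCircleVelocity R (projIcc 0 π Real.pi_nonneg ((t - h / 2) / |R|))

theorem hasDerivAt_archPath (R h t : ℝ) : HasDerivAt (archPath R h) (archTangent R h t) t := by
  have hparam : HasDerivAt (fun t => (t - h / 2) / |R|) |R|⁻¹ t := by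
    simpa using ((hasDerivAt_id t).sub_const (h / 2)).div_const |R|
  exact ((hasDerivAt_tangentExtension Real.pi_nonneg
    (fun φ _ => (hasDerivAt_halfCircle R φ).hasDerivWithinAt) _).scomp t hparam).const_add _

theorem norm_archTangent (hR : R ≠ 0) (h t : ℝ) : ‖archTangent R h t‖ = 1 := by
  rw [archTangent, norm_smul, norm_halfCircleVelocity, norm_inv, Real.norm_eq_abs, abs_abs,
    inv_mul_cancel₀ (abs_ne_zero.2 hR)]

theorem lipschitzWith_archTangent (R h : ℝ) : LipschitzWith ‖R‖₊⁻¹ (archTangent R h) := by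
  have hparam : LipschitzWith ‖R‖₊⁻¹ fun t => (t - h / 2) / |R| :=
    LipschitzWith.of_dist_le_mul fun s t => by
      rw [Real.dist_eq, ← sub_div, sub_sub_sub_cancel_right, abs_div, abs_abs, NNReal.coe_inv,
        coe_nnnorm, Real.norm_eq_abs, Real.dist_eq, div_eq_inv_mul]
  have hangle : LipschitzWith ‖R‖₊⁻¹
      fun t => (projIcc 0 π Real.pi_nonneg ((t - h / 2) / |R|) : ℝ) := by
    simpa using! LipschitzWith.subtype_val _ |>.comp ((LipschitzWith.projIcc _).comp hparam)
  refine ((lipschitzWith_smul |R|⁻¹).comp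
    ((lipschitzWith_halfCircleVelocity R).comp hangle)).weaken ?_
  rw [nnnorm_inv, Real.nnnorm_abs, ← mul_assoc]
  exact mul_le_of_le_one_left zero_le inv_mul_le_one

theorem archTangent_start (hR : R ≠ 0) (hh : 0 ≤ h) : archTangent R h 0 = !₂[0, 1] := by
  have hangle : (0 - h / 2) / |R| ≤ 0 :=
    div_nonpos_of_nonpos_of_nonneg (by linarith) (abs_nonneg R)
  rw [archTangent, projIcc_of_le_left _ hangle]
  ext i
  fin_cases i <;> simp [halfCircleVelocity, hR]

theorem archTangent_end (hR : R ≠ 0) (hh : 0 ≤ h) :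
    archTangent R h (h + π * |R|) = -!₂[0, 1] := by
  have hangle : π ≤ (h + π * |R| - h / 2) / |R| := by
    rw [le_div_iff₀ (abs_pos.2 hR)]
    linarith
  rw [archTangent, projIcc_of_right_le _ hangle]
  ext i
  fin_cases i <;> simp [halfCircleVelocity, hR]

theorem archPath_of_le (hR : R ≠ 0) (ht : t ≤ h / 2) : archPath R h t = !₂[R, t] := by
  have hangle : (t - h / 2) / |R| ≤ 0 :=
    div_nonpos_of_nonpos_of_nonneg (sub_nonpos.2 ht) (abs_nonneg R)
  rw [archPath, tangentExtension_of_le_left _ hangle]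
  ext i
  fin_cases i <;> simp [halfCircle, halfCircleVelocity, hR]

theorem archPath_arc (hR : R ≠ 0) {φ : ℝ} (hφ : φ ∈ Icc 0 π) :
    archPath R h (h / 2 + |R| * φ) = !₂[0, h / 2] + halfCircle R φ := by
  rw [archPath, add_sub_cancel_left, mul_div_cancel_left₀ _ (abs_ne_zero.2 hR),
    tangentExtension_of_mem _ hφ]

theorem archPath_of_ge (hR : R ≠ 0) (ht : h / 2 + π * |R| ≤ t) :
    archPath R h t = !₂[-R, h + π * |R| - t] := by
  have hR' : |R| ≠ 0 := abs_ne_zero.2 hR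
  have hangle : π ≤ (t - h / 2) / |R| := by
    rw [le_div_iff₀ (abs_pos.2 hR)]
    linarith
  have hheight : h / 2 - ((t - h / 2) / |R| - π) * |R| = h + π * |R| - t := by
    rw [sub_mul, div_mul_cancel₀ _ hR']
    ring
  rw [archPath, tangentExtension_of_right_le _ hangle, ← hheight]
  ext i
  fin_cases i <;> simp [halfCircle, halfCircleVelocity, sub_eq_add_neg]

theorem archPath_start (hR : R ≠ 0) (hh : 0 ≤ h) : archPath R h 0 = !₂[R, 0] :=
  archPath_of_le hR (by linarith)

theorem archPath_end (hR : R ≠ 0) (hh : 0 ≤ h) : archPath R h (h + π * |R|) = !₂[-R, 0] := by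
  rw [archPath_of_ge hR (by linarith), sub_self]

theorem sub_projIcc_mul_sin_eq_zero (s : ℝ) :
    (s - projIcc 0 π Real.pi_nonneg s) * Real.sin (projIcc 0 π Real.pi_nonneg s) = 0 := by
  rcases le_total s 0 with hs | hs
  · simp [projIcc_of_le_left _ hs]
  rcases le_total s π with hs' | hs'
  · simp [projIcc_of_mem _ ⟨hs, hs'⟩]
  · simp [projIcc_of_right_le _ hs']

theorem tangentExtension_halfCircle_apply_zero (R s : ℝ) :
    tangentExtension Real.pi_nonneg (halfCircle R) (halfCircleVelocity R) s 0 =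
      R * Real.cos (projIcc 0 π Real.pi_nonneg s) := by
  simp only [tangentExtension, halfCircle, halfCircleVelocity, PiLp.add_apply, PiLp.smul_apply,
    smul_eq_mul, Matrix.cons_val_zero]
  linear_combination -R * sub_projIcc_mul_sin_eq_zero s

theorem tangentExtension_halfCircle_apply_one (R s : ℝ) :
    tangentExtension Real.pi_nonneg (halfCircle R) (halfCircleVelocity R) s 1 =
      |R| * (Real.sin (projIcc 0 π Real.pi_nonneg s) +
        (s - projIcc 0 π Real.pi_nonneg s) * Real.cos (projIcc 0 π Real.pi_nonneg s)) := by
  simp only [tangentExtension, halfCircle, halfCircleVelocity, PiLp.add_apply, PiLp.smul_apply,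
    smul_eq_mul, Matrix.cons_val_one, Matrix.cons_val_fin_one]
  ring

theorem tangentExtension_halfCircle_injective (hR : R ≠ 0) :
    (tangentExtension Real.pi_nonneg (halfCircle R) (halfCircleVelocity R)).Injective := by
  intro s s' heq
  have hcos : Real.cos (projIcc 0 π Real.pi_nonneg s) =
      Real.cos (projIcc 0 π Real.pi_nonneg s') := by
    have hfst := congrArg (fun p : ℝ² => p 0) heq
    simp only [tangentExtension_halfCircle_apply_zero] at hfst
    exact mul_left_cancel₀ hR hfst
  have hproj : projIcc 0 π Real.pi_nonneg s = projIcc 0 π Real.pi_nonneg s' :=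
    Subtype.ext (Real.injOn_cos (Subtype.coe_prop _) (Subtype.coe_prop _) hcos)
  have hsnd := congrArg (fun p : ℝ² => p 1) heq
  have hs := sub_projIcc_mul_sin_eq_zero s
  simp only [tangentExtension_halfCircle_apply_one] at hsnd
  rw [hproj] at hs hsnd
  linear_combination (s' - s) * Real.sin_sq_add_cos_sq (projIcc 0 π Real.pi_nonneg s') +
    Real.cos (projIcc 0 π Real.pi_nonneg s') * mul_left_cancel₀ (abs_ne_zero.2 hR) hsnd +
    Real.sin (projIcc 0 π Real.pi_nonneg s') * (hs - sub_projIcc_mul_sin_eq_zero s')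

theorem archPath_injective (hR : R ≠ 0) (h : ℝ) : (archPath R h).Injective := by
  intro t t' heq
  have hangle := tangentExtension_halfCircle_injective hR (add_left_cancel heq)
  exact sub_left_injective ((div_left_inj' (abs_ne_zero.2 hR)).1 hangle)

theorem add_halfCircle_mem_arch (hh : 0 ≤ h) {φ : ℝ} (hφ : φ ∈ Icc 0 π) :
    !₂[0, h / 2] + halfCircle R φ ∈ arch h |R| := by
  have hheight : h / 2 ≤ (!₂[0, h / 2] + halfCircle R φ) 1 :=
    le_add_of_nonneg_right (mul_nonneg (abs_nonneg R) (Real.sin_nonneg_of_mem_Icc hφ))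
  refine ⟨(div_nonneg hh zero_le_two).trans hheight, (archRadius_of_ge hheight).trans ?_⟩
  rw [← norm_halfCircle R φ, EuclideanSpace.norm_eq]
  simp

theorem archPath_mem_arch (hR : R ≠ 0) (hh : 0 ≤ h) (ht : t ∈ Icc 0 (h + π * |R|)) :
    archPath R h t ∈ arch h |R| := by
  rcases le_total t (h / 2) with hleft | hleft
  · rw [archPath_of_le hR hleft]
    exact ⟨ht.1, archRadius_of_le hleft⟩
  rcases le_total (h / 2 + π * |R|) t with hright | hright
  · rw [archPath_of_ge hR hright]
    refine ⟨sub_nonneg.2 ht.2, (archRadius_of_le ?_).trans (abs_neg R)⟩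
    change h + π * |R| - t ≤ h / 2
    linarith
  · have hR' : 0 < |R| := abs_pos.2 hR
    have hangle : (t - h / 2) / |R| ∈ Icc 0 π :=
      ⟨div_nonneg (sub_nonneg.2 hleft) hR'.le, (div_le_iff₀ hR').2 (sub_le_iff_le_add'.2 hright)⟩
    rw [archPath, tangentExtension_of_mem _ hangle]
    exact add_halfCircle_mem_arch hh hangle

theorem exists_archPath_eq (hR : R ≠ 0) (hh : 0 ≤ h) (hp : p ∈ arch h |R|) :
    ∃ t ∈ Icc 0 (h + π * |R|), archPath R h t = p := by
  obtain ⟨hnonneg, hradius⟩ := hp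
  have hlen : 0 ≤ π * |R| := mul_nonneg Real.pi_nonneg (abs_nonneg R)
  rcases le_total (p 1) (h / 2) with hlow | hhigh
  · rw [archRadius_of_le hlow, abs_eq_abs] at hradius
    rcases hradius with hright | hleft
    · refine ⟨p 1, ⟨hnonneg, by linarith⟩, ?_⟩
      rw [archPath_of_le hR hlow]
      ext i
      fin_cases i <;> simp [hright]
    · refine ⟨h + π * |R| - p 1, ⟨by linarith, by linarith⟩, ?_⟩
      rw [archPath_of_ge hR (by linarith)]
      ext i
      fin_cases i <;> simp [hleft]
  · rw [archRadius_of_ge hhigh, ← norm_vec₂] at hradius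
    obtain ⟨φ, hφ, heq⟩ := exists_halfCircle_eq (p := !₂[p 0, p 1 - h / 2]) hR
      (sub_nonneg.2 hhigh) hradius
    have hlower : 0 ≤ |R| * φ := mul_nonneg (abs_nonneg R) hφ.1
    have hupper : |R| * φ ≤ |R| * π := mul_le_mul_of_nonneg_left hφ.2 (abs_nonneg R)
    refine ⟨h / 2 + |R| * φ, ⟨by linarith, by linarith⟩, ?_⟩
    rw [archPath_arc hR hφ, heq]
    ext i
    fin_cases i <;> simp

theorem image_archPath (hR : R ≠ 0) (hh : 0 ≤ h) :
    archPath R h '' Icc 0 (h + π * |R|) = arch h |R| :=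
  Subset.antisymm (image_subset_iff.2 fun _ => archPath_mem_arch hR hh)
    fun _ => exists_archPath_eq hR hh

theorem eq_zero_of_archPath_apply_one_eq_zero (hR : R ≠ 0) (hh : 0 ≤ h)
    (ht : t ∈ Ico 0 (h + π * |R|)) (hzero : archPath R h t 1 = 0) : t = 0 := by
  have hradius := (archPath_mem_arch hR hh (Ico_subset_Icc_self ht)).2
  rw [archRadius_of_le (hzero.trans_le (div_nonneg hh zero_le_two)), abs_eq_abs] at hradius
  rcases hradius with hstart | hend
  · refine archPath_injective hR h ?_
    rw [archPath_start hR hh]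
    ext i
    fin_cases i <;> simp [hstart, hzero]
  · refine absurd (archPath_injective hR h ?_) ht.2.ne
    rw [archPath_end hR hh]
    ext i
    fin_cases i <;> simp [hend, hzero]

end Arch

section HalfTurn

variable {a h : ℝ} {p : ℝ²} {m : ℤ}

/-- The `m`-th power of the point reflection in `(a, 0)`, the midpoint of the centres `(0, h / 2)`
and `(2 * a, -h / 2)` of the two families of half-circles. -/
noncomputable def halfTurn (a : ℝ) (m : ℤ) (p : ℝ²) : ℝ² := !₂[a, 0] + (-1 : ℝ) ^ m • (p - !₂[a, 0])

theorem halfTurn_apply_zero (a : ℝ) (m : ℤ) (p : ℝ²) :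
    halfTurn a m p 0 = a + (-1) ^ m * (p 0 - a) := by
  simp [halfTurn]

theorem halfTurn_apply_one (a : ℝ) (m : ℤ) (p : ℝ²) : halfTurn a m p 1 = (-1) ^ m * p 1 := by
  simp [halfTurn]

theorem halfTurn_of_even (a : ℝ) (hm : Even m) (p : ℝ²) : halfTurn a m p = p := by
  rw [halfTurn, hm.neg_one_zpow, one_smul, add_sub_cancel]

theorem halfTurn_involutive (a : ℝ) (m : ℤ) : (halfTurn a m).Involutive := fun p => by
  rw [halfTurn, halfTurn, add_sub_cancel_left, smul_smul, ← mul_zpow, neg_one_mul, neg_neg,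
    one_zpow, one_smul, add_sub_cancel]

theorem continuous_halfTurn (a : ℝ) (m : ℤ) : Continuous (halfTurn a m) := by
  unfold halfTurn
  fun_prop

theorem halfTurn_mem (m : ℤ) (hp : p ∈ sigmaCurve a h) : halfTurn a m p ∈ sigmaCurve a h := by
  rcases Int.even_or_odd m with hm | hm
  · rwa [halfTurn_of_even a hm]
  have hzero : halfTurn a m p 0 = 2 * a - p 0 := by
    rw [halfTurn_apply_zero, hm.neg_one_zpow]
    ring
  have hone : halfTurn a m p 1 = -p 1 := by
    rw [halfTurn_apply_one, hm.neg_one_zpow, neg_one_mul]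
  rcases hp with (⟨⟨i, hi⟩, hle⟩ | ⟨⟨i, hi⟩, hle⟩) | ⟨⟨j, hj⟩, hle⟩
  · refine Or.inl (Or.inr ⟨⟨i, ?_⟩, ?_⟩)
    · rw [hzero, hone, ← hi]
      ring_nf
    · linarith
  · refine Or.inl (Or.inl ⟨⟨i, ?_⟩, ?_⟩)
    · rw [hzero, hone, ← hi]
      ring_nf
    · linarith
  · refine Or.inr ⟨⟨-j, ?_⟩, ?_⟩
    · rw [hzero, hj]
      push_cast
      ring
    · rw [hone]
      exact ⟨neg_le_neg hle.2, neg_le.1 hle.1⟩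

theorem halfTurn_mem_iff : halfTurn a m p ∈ sigmaCurve a h ↔ p ∈ sigmaCurve a h :=
  ⟨fun hp => halfTurn_involutive a m p ▸ halfTurn_mem m hp, halfTurn_mem m⟩

theorem exists_halfTurn_apply_one_nonneg (a : ℝ) (p : ℝ²) : ∃ m, 0 ≤ halfTurn a m p 1 := by
  rcases le_total 0 (p 1) with hp | hp
  · exact ⟨0, by simpa [halfTurn_apply_one] using hp⟩
  · exact ⟨1, by simpa [halfTurn_apply_one] using hp⟩

end HalfTurn

section Radius

variable {a h : ℝ} {p : ℝ²} {m n : ℤ}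

/-- The signed radius of the `m`-th arch. Its absolute value takes each of the radii
`(1 + 2 * i) * a` twice, once for each parity of `m`; its sign makes the `m`-th arch, moved by
`halfTurn a m`, end where the next one starts. -/
def signedRadius (a : ℝ) (m : ℤ) : ℝ := (2 * m + 1) * a

theorem signedRadius_neg_sub_one (a : ℝ) (m : ℤ) :
    signedRadius a (-m - 1) = -signedRadius a m := by
  rw [signedRadius, signedRadius]
  push_cast
  ring

theorem signedRadius_neg (a : ℝ) (m : ℤ) : signedRadius a (-m) = 2 * a - signedRadius a m := by
  rw [signedRadius, signedRadius]
  push_cast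
  ring

theorem abs_signedRadius_natCast (ha : 0 ≤ a) (i : ℕ) :
    |signedRadius a i| = (1 + 2 * i) * a := by
  rw [signedRadius, Int.cast_natCast, abs_of_nonneg (by positivity), add_comm]

theorem abs_le_abs_signedRadius (a : ℝ) (m : ℤ) : |a| ≤ |signedRadius a m| := by
  have hodd : (1 : ℝ) ≤ |2 * (m : ℝ) + 1| := mod_cast Int.one_le_abs (by lia : 2 * m + 1 ≠ 0)
  rw [signedRadius, abs_mul]
  exact le_mul_of_one_le_left (abs_nonneg a) hodd

theorem signedRadius_ne_zero (ha : a ≠ 0) (m : ℤ) : signedRadius a m ≠ 0 :=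
  abs_pos.1 ((abs_pos.2 ha).trans_le (abs_le_abs_signedRadius a m))

theorem signedRadius_injective (ha : a ≠ 0) : (signedRadius a).Injective := fun m n hmn => by
  simpa [signedRadius, ha] using hmn

theorem eq_of_abs_signedRadius_eq (ha : a ≠ 0) (hsign : (-1 : ℝ) ^ m = (-1) ^ n)
    (hradius : |signedRadius a m| = |signedRadius a n|) : m = n := by
  rcases abs_eq_abs.1 hradius with heq | heq
  · exact signedRadius_injective ha heq
  · rw [← signedRadius_neg_sub_one] at heq
    rw [signedRadius_injective ha heq, zpow_sub_one₀ (by norm_num), neg_one_zpow_neg, inv_neg_one,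
      mul_neg_one, neg_eq_self] at hsign
    exact absurd hsign (zpow_ne_zero n (by norm_num))

theorem exists_abs_signedRadius_eq (ha : 0 ≤ a) (k : ℤ) (i : ℕ) :
    ∃ m : ℤ, (-1 : ℝ) ^ m = (-1) ^ k ∧ |signedRadius a m| = (1 + 2 * i) * a := by
  have hradius := abs_signedRadius_natCast ha i
  rcases neg_one_zpow_eq_or_eq_neg (α := ℝ) i k with hsign | hsign
  · exact ⟨i, hsign, hradius⟩
  · refine ⟨-i - 1, ?_, by rw [signedRadius_neg_sub_one, abs_neg, hradius]⟩
    rw [zpow_sub_one₀ (by norm_num), neg_one_zpow_neg, inv_neg_one, mul_neg_one, hsign, neg_neg]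

theorem exists_nat_abs_eq_iff_exists_signedRadius (ha : 0 ≤ a) {x : ℝ} :
    (∃ i : ℕ, |x| = (1 + 2 * i) * a) ↔ ∃ j : ℤ, x = signedRadius a j := by
  constructor
  · rintro ⟨i, hi⟩
    rw [← abs_signedRadius_natCast ha, abs_eq_abs, ← signedRadius_neg_sub_one] at hi
    exact hi.elim (⟨_, ·⟩) (⟨_, ·⟩)
  · rintro ⟨j, rfl⟩
    obtain ⟨i, rfl | rfl⟩ : ∃ i : ℕ, j = i ∨ j = -i - 1 := by
      rcases lt_or_ge j 0 with hj | hj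
      · exact ⟨(-j - 1).toNat, by lia⟩
      · exact ⟨j.toNat, by lia⟩
    · exact ⟨i, abs_signedRadius_natCast ha i⟩
    · exact ⟨i, by rw [signedRadius_neg_sub_one, abs_neg, abs_signedRadius_natCast ha]⟩

theorem mem_iff_exists_archRadius_eq (ha : 0 ≤ a) (hh : 0 ≤ h) (hp : 0 ≤ p 1) :
    p ∈ sigmaCurve a h ↔ ∃ i : ℕ, archRadius h p = (1 + 2 * i) * a := by
  constructor
  · rintro ((⟨hi, hle⟩ | ⟨hi, hle⟩) | ⟨hj, hle⟩)
    · rwa [archRadius_of_ge hle]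
    · obtain ⟨rfl, hp0⟩ : h = 0 ∧ p 1 = 0 := by constructor <;> linarith
      simp only [hp0, zero_div, add_zero, zero_pow two_ne_zero, Real.sqrt_sq_eq_abs] at hi
      obtain ⟨j, hj⟩ := (exists_nat_abs_eq_iff_exists_signedRadius ha).1 hi
      rw [archRadius_of_le (by linarith), exists_nat_abs_eq_iff_exists_signedRadius ha]
      exact ⟨j + 1, by rw [signedRadius] at *; push_cast; linarith⟩
    · rwa [archRadius_of_le hle.2, exists_nat_abs_eq_iff_exists_signedRadius ha]
  · intro hi
    rcases le_total (h / 2) (p 1) with hle | hle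
    · rw [archRadius_of_ge hle] at hi
      exact Or.inl (Or.inl ⟨hi, hle⟩)
    · rw [archRadius_of_le hle, exists_nat_abs_eq_iff_exists_signedRadius ha] at hi
      exact Or.inr ⟨hi, by linarith, hle⟩

theorem isClosed (ha : 0 < a) (hh : 0 ≤ h) : IsClosed (sigmaCurve a h) := by
  have hcont := continuous_archRadius h
  have hradii : IsClosed {p : ℝ² | (archRadius h p / a - 1) / 2 ∈ range ((↑) : ℕ → ℝ)} :=
    Nat.isClosedEmbedding_coe_real.isClosed_range.preimage (by fun_prop)
  have hhalf : IsClosed {p : ℝ² | 0 ≤ p 1} := isClosed_le continuous_const (by fun_prop)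
  have hupper : {p : ℝ² | 0 ≤ p 1} ∩ sigmaCurve a h =
      {p | 0 ≤ p 1} ∩ {p | (archRadius h p / a - 1) / 2 ∈ range ((↑) : ℕ → ℝ)} := by
    ext p
    refine and_congr_right fun hp => (mem_iff_exists_archRadius_eq ha.le hh hp).trans
      (exists_congr fun i => ?_)
    rw [eq_div_iff two_ne_zero, eq_sub_iff_add_eq, eq_div_iff ha.ne', add_comm, mul_comm 2, eq_comm]
  have hlower : {p : ℝ² | p 1 ≤ 0} ∩ sigmaCurve a h =
      halfTurn a 1 ⁻¹' ({p | 0 ≤ p 1} ∩ sigmaCurve a h) := by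
    ext p
    simp [halfTurn_mem_iff, halfTurn_apply_one]
  have hcover : {p : ℝ² | 0 ≤ p 1} ∪ {p | p 1 ≤ 0} = univ :=
    eq_univ_of_forall fun p => le_total 0 (p 1)
  have hclosed := hhalf.inter hradii
  rw [← hupper] at hclosed
  have hunion := hclosed.union (hclosed.preimage (continuous_halfTurn a 1))
  rwa [← hlower, ← union_inter_distrib_right, hcover, univ_inter] at hunion

theorem eq_iUnion_halfTurn_image_arch (ha : 0 ≤ a) (hh : 0 ≤ h) :
    sigmaCurve a h = ⋃ m, halfTurn a m '' arch h |signedRadius a m| := by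
  refine Subset.antisymm (fun p hp => ?_)
    (iUnion_subset fun m => image_subset_iff.2 fun p hp => ?_)
  · obtain ⟨k, hk⟩ := exists_halfTurn_apply_one_nonneg a p
    obtain ⟨i, hi⟩ := (mem_iff_exists_archRadius_eq ha hh hk).1 (halfTurn_mem k hp)
    obtain ⟨m, hsign, hradius⟩ := exists_abs_signedRadius_eq ha k i
    have hturn : halfTurn a m = halfTurn a k := by unfold halfTurn; rw [hsign]
    refine mem_iUnion.2 ⟨m, halfTurn a k p, ⟨hk, hi.trans hradius.symm⟩, ?_⟩
    rw [hturn, halfTurn_involutive]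
  · refine halfTurn_mem m ((mem_iff_exists_archRadius_eq ha hh hp.1).2 ?_)
    rw [hp.2]
    exact (exists_nat_abs_eq_iff_exists_signedRadius ha).2 ⟨m, rfl⟩

end Radius

section Spiral

variable {a h : ℝ} {m n : ℤ}

/-- The time at which the arc-length parametrization of `sigmaCurve a h` enters the `m`-th arch,
arch number `0` being entered at time `0`. -/
noncomputable def startTime (a h : ℝ) (m : ℤ) : ℝ := m * h + π * a * (m * |(m : ℝ)|)

theorem startTime_add_one (ha : 0 ≤ a) (h : ℝ) (m : ℤ) :
    startTime a h (m + 1) = startTime a h m + (h + π * |signedRadius a m|) := by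
  have hsq : ((m : ℝ) + 1) * |(m : ℝ) + 1| = m * |(m : ℝ)| + |2 * (m : ℝ) + 1| := by
    rcases lt_or_ge m 0 with hm | hm
    · have hm' : (m : ℝ) + 1 ≤ 0 := mod_cast hm
      rw [abs_of_nonpos hm', abs_of_nonpos (by linarith), abs_of_nonpos (by linarith)]
      ring
    · have hm' : (0 : ℝ) ≤ m := mod_cast hm
      rw [abs_of_nonneg hm', abs_of_nonneg (by linarith), abs_of_nonneg (by linarith)]
      ring
  rw [startTime, startTime, signedRadius, abs_mul, abs_of_nonneg ha]
  push_cast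
  linear_combination π * a * hsq

theorem strictMono_startTime (ha : 0 < a) (hh : 0 ≤ h) : StrictMono (startTime a h) :=
  strictMono_int_of_lt_succ fun m => by
    rw [startTime_add_one ha.le]
    have := mul_pos Real.pi_pos (abs_pos.2 (signedRadius_ne_zero ha.ne' m))
    linarith

theorem tendsto_startTime_atTop (ha : 0 < a) (hh : 0 ≤ h) :
    Tendsto (startTime a h) atTop atTop := by
  have hslope : 0 < π * a := mul_pos Real.pi_pos ha
  refine tendsto_atTop_mono' _ ?_ (tendsto_intCast_atTop_atTop.const_mul_atTop hslope)
  filter_upwards [eventually_ge_atTop 1] with m hm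
  have hm' : (1 : ℝ) ≤ m := mod_cast hm
  rw [startTime, abs_of_nonneg (zero_le_one.trans hm')]
  exact le_add_of_nonneg_of_le (by positivity)
    (mul_le_mul_of_nonneg_left (le_mul_of_one_le_left (zero_le_one.trans hm') hm') hslope.le)

theorem exists_mem_Ico_startTime (ha : 0 < a) (hh : 0 ≤ h) (t : ℝ) :
    ∃ m, t ∈ Ico (startTime a h m) (startTime a h (m + 1)) := by
  have hodd : startTime a h = Neg.neg ∘ startTime a h ∘ Neg.neg := by
    funext m
    simp only [startTime, Function.comp_apply, Int.cast_neg, abs_neg]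
    ring
  have htop := tendsto_startTime_atTop ha hh
  have hbot : Tendsto (startTime a h) atBot atBot := by
    rw [hodd]
    exact tendsto_neg_atTop_atBot.comp (htop.comp tendsto_neg_atBot_atTop)
  exact exists_mem_Ico_of_tendsto_int (strictMono_startTime ha hh).monotone htop hbot t

theorem sub_startTime_mem_Ico (ha : 0 ≤ a) {t : ℝ}
    (ht : t ∈ Ico (startTime a h m) (startTime a h (m + 1))) :
    t - startTime a h m ∈ Ico 0 (h + π * |signedRadius a m|) := by
  rw [startTime_add_one ha] at ht
  exact ⟨sub_nonneg.2 ht.1, sub_lt_iff_lt_add'.2 ht.2⟩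

/-- The part of the arc-length parametrization of `sigmaCurve a h` that runs through the `m`-th
arch: the arches lie alternately in the upper and the lower half-plane. -/
noncomputable def spiralPiece (a h : ℝ) (m : ℤ) (t : ℝ) : ℝ² :=
  halfTurn a m (archPath (signedRadius a m) h (t - startTime a h m))

/-- The velocity of `spiralPiece a h m`. -/
noncomputable def spiralTangent (a h : ℝ) (m : ℤ) (t : ℝ) : ℝ² :=
  (-1 : ℝ) ^ m • archTangent (signedRadius a m) h (t - startTime a h m)

theorem hasDerivAt_spiralPiece (a h : ℝ) (m : ℤ) (t : ℝ) :
    HasDerivAt (spiralPiece a h m) (spiralTangent a h m t) t :=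
  ((((hasDerivAt_archPath _ h _).comp_sub_const t (startTime a h m)).sub_const
    !₂[a, 0]).const_smul ((-1 : ℝ) ^ m)).const_add !₂[a, 0]

theorem norm_spiralTangent (ha : a ≠ 0) (h : ℝ) (m : ℤ) (t : ℝ) :
    ‖spiralTangent a h m t‖ = 1 := by
  rw [spiralTangent, norm_smul, norm_archTangent (signedRadius_ne_zero ha m), Real.norm_eq_abs,
    abs_neg_one_zpow, one_mul]

theorem lipschitzWith_spiralTangent (ha : a ≠ 0) (h : ℝ) (m : ℤ) :
    LipschitzWith ‖a‖₊⁻¹ (spiralTangent a h m) := by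
  have hradius : ‖signedRadius a m‖₊⁻¹ ≤ ‖a‖₊⁻¹ :=
    inv_anti₀ (nnnorm_pos.2 ha) (abs_le_abs_signedRadius a m)
  refine LipschitzWith.of_dist_le_mul fun s t => ?_
  rw [spiralTangent, spiralTangent, dist_smul₀, Real.norm_eq_abs, abs_neg_one_zpow, one_mul,
    ← dist_sub_right s t (startTime a h m)]
  exact ((lipschitzWith_archTangent _ h).weaken hradius).dist_le_mul _ _

theorem spiralPiece_startTime (ha : a ≠ 0) (hh : 0 ≤ h) (m : ℤ) :
    spiralPiece a h m (startTime a h m) = !₂[a + (-1) ^ m * (signedRadius a m - a), 0] := by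
  rw [spiralPiece, sub_self, archPath_start (signedRadius_ne_zero ha m) hh]
  ext i
  fin_cases i <;> simp [halfTurn]

theorem spiralPiece_startTime_add_one (ha : 0 < a) (hh : 0 ≤ h) (m : ℤ) :
    spiralPiece a h m (startTime a h (m + 1)) =
      spiralPiece a h (m + 1) (startTime a h (m + 1)) := by
  have hfst : a + (-1) ^ (m + 1) * (signedRadius a (m + 1) - a) =
      a + (-1) ^ m * (-signedRadius a m - a) := by
    rw [zpow_add_one₀ (by norm_num), signedRadius, signedRadius]
    push_cast
    ring
  rw [spiralPiece_startTime ha.ne' hh, hfst, spiralPiece, startTime_add_one ha.le,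
    add_sub_cancel_left, archPath_end (signedRadius_ne_zero ha.ne' m) hh]
  ext i
  fin_cases i <;> simp [halfTurn]

theorem spiralTangent_startTime_add_one (ha : 0 < a) (hh : 0 ≤ h) (m : ℤ) :
    spiralTangent a h m (startTime a h (m + 1)) =
      spiralTangent a h (m + 1) (startTime a h (m + 1)) := by
  rw [spiralTangent, spiralTangent, sub_self, archTangent_start (signedRadius_ne_zero ha.ne' _) hh,
    startTime_add_one ha.le, add_sub_cancel_left,
    archTangent_end (signedRadius_ne_zero ha.ne' m) hh, zpow_add_one₀ (by norm_num),
    mul_neg_one, neg_smul, smul_neg]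

theorem image_spiralPiece (ha : 0 < a) (hh : 0 ≤ h) (m : ℤ) :
    spiralPiece a h m '' Icc (startTime a h m) (startTime a h (m + 1)) =
      halfTurn a m '' arch h |signedRadius a m| := by
  have hshift := image_sub_const_Icc (startTime a h m) (startTime a h m)
    (startTime a h (m + 1))
  rw [sub_self, startTime_add_one ha.le, add_sub_cancel_left] at hshift
  rw [← image_archPath (signedRadius_ne_zero ha.ne' m) hh, ← hshift, startTime_add_one ha.le,
    image_image, image_image]
  rfl

theorem arch_index_eq_of_spiralPiece_eq (ha : 0 < a) (hh : 0 ≤ h) {s t : ℝ}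
    (hs : s ∈ Ico (startTime a h m) (startTime a h (m + 1)))
    (ht : t ∈ Ico (startTime a h n) (startTime a h (n + 1)))
    (heq : spiralPiece a h m s = spiralPiece a h n t) : m = n := by
  have hRm := signedRadius_ne_zero ha.ne' m
  have hRn := signedRadius_ne_zero ha.ne' n
  have hs' := sub_startTime_mem_Ico ha.le hs
  have ht' := sub_startTime_mem_Ico ha.le ht
  have hp := archPath_mem_arch hRm hh (Ico_subset_Icc_self hs')
  have hq := archPath_mem_arch hRn hh (Ico_subset_Icc_self ht')
  have hheight : spiralPiece a h m s 1 = spiralPiece a h n t 1 := by rw [heq]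
  rw [spiralPiece, spiralPiece, halfTurn_apply_one, halfTurn_apply_one] at hheight
  rcases neg_one_zpow_eq_or_eq_neg (α := ℝ) m n with hsign | hsign
  · have hturn : halfTurn a m = halfTurn a n := by unfold halfTurn; rw [hsign]
    rw [spiralPiece, spiralPiece, hturn, (halfTurn_involutive a n).injective.eq_iff] at heq
    exact eq_of_abs_signedRadius_eq ha.ne' hsign (hp.2.symm.trans (heq ▸ hq.2))
  · rw [hsign, neg_mul, ← mul_neg, mul_right_inj' (zpow_ne_zero n (by norm_num))] at hheight
    have hs0 := eq_zero_of_archPath_apply_one_eq_zero hRm hh hs' (by linarith [hp.1, hq.1])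
    have ht0 := eq_zero_of_archPath_apply_one_eq_zero hRn hh ht' (by linarith [hp.1, hq.1])
    rw [sub_eq_zero.1 hs0, sub_eq_zero.1 ht0, spiralPiece_startTime ha.ne' hh,
      spiralPiece_startTime ha.ne' hh, hsign] at heq
    have hindex : m = -n := by
      have hstart := add_left_cancel (congrArg (fun p : ℝ² => p 0) heq)
      rw [neg_mul, ← mul_neg, mul_right_inj' (zpow_ne_zero n (by norm_num))] at hstart
      refine signedRadius_injective ha.ne' ?_
      rw [signedRadius_neg]
      linarith
    rw [hindex, neg_one_zpow_neg, self_eq_neg] at hsign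
    exact absurd hsign (zpow_ne_zero n (by norm_num))

theorem eq_of_spiralPiece_eq (ha : 0 < a) (hh : 0 ≤ h) (m n : ℤ) (s : ℝ)
    (hs : s ∈ Ico (startTime a h m) (startTime a h (m + 1))) (t : ℝ)
    (ht : t ∈ Ico (startTime a h n) (startTime a h (n + 1)))
    (heq : spiralPiece a h m s = spiralPiece a h n t) : s = t := by
  obtain rfl := arch_index_eq_of_spiralPiece_eq ha hh hs ht heq
  exact sub_left_injective <|
    archPath_injective (signedRadius_ne_zero ha.ne' m) h ((halfTurn_involutive a m).injective heq)

end Spiral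

end sigmaCurve

open sigmaCurve in
/-- `σ_{a,h}` is a closed, connected, `C^{1,1}` one-dimensional submanifold of the
plane: it admits an injective unit-speed `C¹` parametrization whose derivative is
Lipschitz. -/
theorem sigmaCurve_closed_connected_C11 (a h : ℝ) (ha : 0 < a) (hh : 0 ≤ h) :
    IsClosed (sigmaCurve a h) ∧ IsConnected (sigmaCurve a h) ∧
    ∃ γ : ℝ → EuclideanSpace ℝ (Fin 2),
      Function.Injective γ ∧ Set.range γ = sigmaCurve a h ∧
      ContDiff ℝ 1 γ ∧ (∀ t : ℝ, ‖deriv γ t‖ = 1) ∧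
      ∃ K : NNReal, LipschitzWith K (deriv γ) := by
  have hT := strictMono_startTime ha hh
  have hcover := exists_mem_Ico_startTime ha hh
  have hjoin := spiralPiece_startTime_add_one ha hh
  have hjoin' := spiralTangent_startTime_add_one ha hh
  set γ := glue (startTime a h) (spiralPiece a h)
  have hderiv (t : ℝ) : HasDerivAt γ (glue (startTime a h) (spiralTangent a h) t) t :=
    hasDerivAt_glue hT hcover hjoin hjoin'
      (fun m t _ => (hasDerivAt_spiralPiece a h m t).hasDerivWithinAt) t
  have hlip : LipschitzWith ‖a‖₊⁻¹ (deriv γ) := by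
    rw [deriv_eq hderiv]
    exact lipschitzWith_glue hT hcover hjoin' fun m =>
      (lipschitzWith_spiralTangent ha.ne' h m).lipschitzOnWith
  have hC1 : ContDiff ℝ 1 γ :=
    contDiff_one_iff_deriv.2 ⟨fun t => (hderiv t).differentiableAt, hlip.continuous⟩
  have hrange : range γ = sigmaCurve a h := by
    rw [range_glue hT hcover hjoin, eq_iUnion_halfTurn_image_arch ha.le hh]
    exact iUnion_congr (image_spiralPiece ha hh)
  refine ⟨sigmaCurve.isClosed ha hh, hrange ▸ isConnected_range hC1.continuous, γ,
    glue_injective hT.monotone hcover (eq_of_spiralPiece_eq ha hh), hrange, hC1, fun t => ?_,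
    ‖a‖₊⁻¹, hlip⟩
  rw [(hderiv t).deriv, glue]
  exact norm_spiralTangent ha.ne' h _ t
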